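/- Let ℭ = ({0,1,2}; C_3, U) with U := {0,1} (a unary relation), and let 𝔄 be the structure with domain {0,1,2}^4 (coordinates indexed 0,1,2,3) and relations C_3^A := {(x,y) : (x_0,y_0) ∈ C_3, x_1=y_2, x_2=y_3, x_3=y_1} and R^A := {(x_0,x_1,x_2,x_3) : x_0=x_1 and x_3=1}. Then the map g with g(0)=(0,0,1,1), g(1)=(1,1,0,1), g(2)=(2,1,1,0) is a homomorphism from ℭ to 𝔄, and the map h defined by h(x_0,x_1,x_2,x_3) = x_0 − 1 (mod 3) if (x_1,x_2,x_3) ∈ A_1 := {(1,1,2),(1,2,1),(2,1,1)}, h(x_0,x_1,x_2,x_3) = x_0 if (x_1,x_2,x_3) ∈ A_2 := {(0,1,1),(1,0,1),(1,1,0),(1,1,1)}, and h(x_0,x_1,x_2,x_3) = x_0 + 1 (mod 3) otherwise, is a homomorphism from 𝔄 to ℭ. In particular ℭ and 𝔄 are homomorphically equivalent. -/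

import Mathlib

/-- The three-element domain `{0,1,2}`. -/
abbrev D3 : Type := Fin 3

/-- `C₃ = {(0,1),(1,2),(2,0)}`. -/
def C3P (a b : D3) : Prop := (a = 0 ∧ b = 1) ∨ (a = 1 ∧ b = 2) ∨ (a = 2 ∧ b = 0)

/-- The unary relation `U = {0,1}`. -/
def UP (a : D3) : Prop := a = 0 ∨ a = 1

/-- The relation `C₃^𝔄` on `{0,1,2}⁴`. -/
def C3A (x y : Fin 4 → D3) : Prop :=
  C3P (x 0) (y 0) ∧ x 1 = y 2 ∧ x 2 = y 3 ∧ x 3 = y 1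

/-- The unary relation `R^𝔄` on `{0,1,2}⁴`. -/
def RA (x : Fin 4 → D3) : Prop := x 0 = x 1 ∧ x 3 = 1

/-- The map `g` with `g(0) = (0,0,1,1)`, `g(1) = (1,1,0,1)`, `g(2) = (2,1,1,0)`. -/
def gMap : D3 → Fin 4 → D3 := ![![0,0,1,1], ![1,1,0,1], ![2,1,1,0]]

/-- The map `h`: subtract `1` from `x₀` (mod 3) if `(x₁,x₂,x₃) ∈ A₁`, keep `x₀` if
`(x₁,x₂,x₃) ∈ A₂`, and add `1` (mod 3) otherwise. -/
def hMap (x : Fin 4 → D3) : D3 :=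
  if (x 1, x 2, x 3) = ((1 : D3), (1 : D3), (2 : D3)) ∨
     (x 1, x 2, x 3) = ((1 : D3), (2 : D3), (1 : D3)) ∨
     (x 1, x 2, x 3) = ((2 : D3), (1 : D3), (1 : D3)) then x 0 - 1
  else if (x 1, x 2, x 3) = ((0 : D3), (1 : D3), (1 : D3)) ∨
          (x 1, x 2, x 3) = ((1 : D3), (0 : D3), (1 : D3)) ∨
          (x 1, x 2, x 3) = ((1 : D3), (1 : D3), (0 : D3)) ∨
          (x 1, x 2, x 3) = ((1 : D3), (1 : D3), (1 : D3)) then x 0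
  else x 0 + 1

/-- `g` is a homomorphism from `ℭ = ({0,1,2}; C₃, U)` to `𝔄`. -/
def IsHomCtoA (g : D3 → Fin 4 → D3) : Prop :=
  (∀ a b : D3, C3P a b → C3A (g a) (g b)) ∧
  (∀ a : D3, UP a → RA (g a))

/-- `h` is a homomorphism from `𝔄` to `ℭ`. -/
def IsHomAtoC (h : (Fin 4 → D3) → D3) : Prop :=
  (∀ x y : Fin 4 → D3, C3A x y → C3P (h x) (h y)) ∧
  (∀ x : Fin 4 → D3, RA x → UP (h x))

/-!
`C₃` is the graph of `a ↦ a + 1` on `ℤ/3`, and `C₃^𝔄` pairs this successor in coordinate `0` with a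
rotation of the coordinates `1, 2, 3`. Hence `a ↦ (a, t a, t (a - 1), t (a - 2))` preserves `C₃` for
every `t`, and `x ↦ x₀ + s (x₁, x₂, x₃)` preserves `C₃` exactly when `s` is invariant under
rotation. The map `g` is of the first kind, and `h` is of the second kind with an invariant `s`,
because `A₁` and `A₂` are closed under rotation. The unary relations then force the values of `t`,
and constrain `s` only at the triples `(b, c, 1)`, where `b + s (b, c, 1)` must differ from `2`.
-/

theorem c3P_iff_eq_add_one {a b : D3} : C3P a b ↔ b = a + 1 := by
  revert a b
  unfold C3P
  decide

theorem uP_iff_ne_two {a : D3} : UP a ↔ a ≠ 2 := by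
  revert a
  unfold UP
  decide

/-- The map `a ↦ (a, t a, t (a - 1), t (a - 2))` into the domain of `𝔄`: as `a` runs through the
cycle `C₃`, the last three coordinates rotate through the values of `t`. -/
def cyclicLift (t : D3 → D3) (a : D3) : Fin 4 → D3 :=
  ![a, t a, t (a - 1), t (a - 2)]

theorem c3A_cyclicLift (t : D3 → D3) {a b : D3} (hab : C3P a b) :
    C3A (cyclicLift t a) (cyclicLift t b) := by
  obtain rfl := c3P_iff_eq_add_one.1 hab
  have sub_one : a + 1 - 1 = a := add_sub_cancel_right a 1
  have sub_two : a + 1 - 2 = a - 1 := by grind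
  have add_one : a + 1 = a - 2 := by grind
  exact ⟨hab, congrArg t sub_one.symm, congrArg t sub_two.symm, congrArg t add_one.symm⟩

theorem rA_cyclicLift_iff {t : D3 → D3} {a : D3} :
    RA (cyclicLift t a) ↔ a = t a ∧ t (a - 2) = 1 :=
  Iff.rfl

theorem isHomCtoA_cyclicLift_iff {t : D3 → D3} :
    IsHomCtoA (cyclicLift t) ↔ t 0 = 0 ∧ t 1 = 1 ∧ t 2 = 1 := by
  constructor
  · rintro ⟨-, map_unary⟩
    obtain ⟨zero_eq, t_one⟩ := rA_cyclicLift_iff.1 (map_unary 0 (Or.inl rfl))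
    obtain ⟨-, t_two⟩ := rA_cyclicLift_iff.1 (map_unary 1 (Or.inr rfl))
    exact ⟨zero_eq.symm, t_one, t_two⟩
  · rintro ⟨t_zero, t_one, t_two⟩
    refine ⟨fun _ _ => c3A_cyclicLift t, ?_⟩
    rintro a (rfl | rfl)
    · exact rA_cyclicLift_iff.2 ⟨t_zero.symm, t_one⟩
    · exact rA_cyclicLift_iff.2 ⟨t_one.symm, t_two⟩

theorem gMap_eq_cyclicLift : gMap = cyclicLift ![0, 1, 1] := by
  unfold gMap cyclicLift
  decide

theorem isHomCtoA_gMap : IsHomCtoA gMap := by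
  rw [gMap_eq_cyclicLift]
  exact isHomCtoA_cyclicLift_iff.2 ⟨rfl, rfl, rfl⟩

/-- The map `x ↦ x₀ + s (x₁, x₂, x₃)` on the domain of `𝔄`: coordinate `0` displaced by an amount
that depends on the other three. -/
def shiftBy (s : D3 × D3 × D3 → D3) (x : Fin 4 → D3) : D3 :=
  x 0 + s (x 1, x 2, x 3)

theorem preserves_c3_shiftBy_iff {s : D3 × D3 × D3 → D3} :
    (∀ x y, C3A x y → C3P (shiftBy s x) (shiftBy s y)) ↔
      ∀ b c d, s (d, b, c) = s (b, c, d) := by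
  constructor
  · intro map_cycle b c d
    have edge : C3A ![0, b, c, d] ![1, d, b, c] := ⟨Or.inl ⟨rfl, rfl⟩, rfl, rfl, rfl⟩
    have succ_eq : 1 + s (d, b, c) = 0 + s (b, c, d) + 1 :=
      c3P_iff_eq_add_one.1 (map_cycle _ _ edge)
    grind
  · rintro rotate x y ⟨head, h₁₂, h₂₃, h₃₁⟩
    have head_eq : y 0 = x 0 + 1 := c3P_iff_eq_add_one.1 head
    refine c3P_iff_eq_add_one.2 ?_
    calc y 0 + s (y 1, y 2, y 3)
        = x 0 + 1 + s (x 3, x 1, x 2) := by rw [head_eq, h₁₂, h₂₃, h₃₁]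
      _ = x 0 + 1 + s (x 1, x 2, x 3) := by rw [rotate]
      _ = x 0 + s (x 1, x 2, x 3) + 1 := add_right_comm _ _ _

theorem preserves_unary_shiftBy_iff {s : D3 × D3 × D3 → D3} :
    (∀ x, RA x → UP (shiftBy s x)) ↔ ∀ b c, b + s (b, c, 1) ≠ 2 := by
  constructor
  · intro map_unary b c
    exact uP_iff_ne_two.1 (map_unary ![b, b, c, 1] ⟨rfl, rfl⟩)
  · rintro ne_two x ⟨h₀₁, h₃⟩
    rw [uP_iff_ne_two, shiftBy, h₀₁, h₃]
    exact ne_two (x 1) (x 2)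

theorem isHomAtoC_shiftBy_iff {s : D3 × D3 × D3 → D3} :
    IsHomAtoC (shiftBy s) ↔
      (∀ b c d, s (d, b, c) = s (b, c, d)) ∧ ∀ b c, b + s (b, c, 1) ≠ 2 :=
  and_congr preserves_c3_shiftBy_iff preserves_unary_shiftBy_iff

/-- The set `A₁` of triples at which `h` subtracts `1`. -/
def A₁ : Finset (D3 × D3 × D3) :=
  {(1, 1, 2), (1, 2, 1), (2, 1, 1)}

/-- The set `A₂` of triples at which `h` keeps coordinate `0`. -/
def A₂ : Finset (D3 × D3 × D3) :=
  {(0, 1, 1), (1, 0, 1), (1, 1, 0), (1, 1, 1)}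

/-- The displacement of coordinate `0` under `h`, as a function of the other three coordinates. -/
def hShift (p : D3 × D3 × D3) : D3 :=
  if p ∈ A₁ then -1 else if p ∈ A₂ then 0 else 1

theorem hMap_eq_shiftBy : hMap = shiftBy hShift := by
  funext x
  simp only [hMap, shiftBy, hShift, A₁, A₂, Finset.mem_insert, Finset.mem_singleton]
  split_ifs
  · exact sub_eq_add_neg _ _
  · exact (add_zero _).symm
  · rfl

theorem rotate_mem_A₁_iff : ∀ {b c d : D3}, (d, b, c) ∈ A₁ ↔ (b, c, d) ∈ A₁ := by
  decide

theorem rotate_mem_A₂_iff : ∀ {b c d : D3}, (d, b, c) ∈ A₂ ↔ (b, c, d) ∈ A₂ := by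
  decide

theorem hShift_rotate (b c d : D3) : hShift (d, b, c) = hShift (b, c, d) := by
  simp only [hShift, rotate_mem_A₁_iff, rotate_mem_A₂_iff]

theorem add_hShift_ne_two (b c : D3) : b + hShift (b, c, 1) ≠ 2 := by
  have zero_notMem_A₁ : ∀ c : D3, (0, c, 1) ∉ A₁ := by decide
  have one_mem_A₁_or_A₂ : ∀ c : D3, (1, c, 1) ∈ A₁ ∨ (1, c, 1) ∈ A₂ := by decide
  have two_notMem_A₂ : ∀ c : D3, (2, c, 1) ∉ A₂ := by decide
  unfold hShift
  match b with
  | 0 =>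
    rw [if_neg (zero_notMem_A₁ c)]
    split_ifs <;> decide
  | 1 =>
    rcases one_mem_A₁_or_A₂ c with mem | mem
    · rw [if_pos mem]
      decide
    · rw [if_pos mem]
      split_ifs <;> decide
  | 2 =>
    rw [if_neg (two_notMem_A₂ c)]
    split_ifs <;> decide

theorem isHomAtoC_hMap : IsHomAtoC hMap := by
  rw [hMap_eq_shiftBy]
  exact isHomAtoC_shiftBy_iff.2 ⟨hShift_rotate, add_hShift_ne_two⟩

theorem stmt12 :
    IsHomCtoA gMap ∧ IsHomAtoC hMap ∧
    (∃ (g : D3 → Fin 4 → D3) (h : (Fin 4 → D3) → D3), IsHomCtoA g ∧ IsHomAtoC h) :=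
  ⟨isHomCtoA_gMap, isHomAtoC_hMap, gMap, hMap, isHomCtoA_gMap, isHomAtoC_hMap⟩
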